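/- arXiv:1406.4821 — 3 statements merged into one kernel-verified Lean document; each statement's English description precedes it below -/
import Mathlib

section
/- Let n ≥ 1, let p be a prime and k ≥ 2 an integer with p^k ∣ n and p^(k+1) ∤ n. Let u be the unit of ℤ/nℤ determined by the Chinese Remainder Theorem by the conditions u ≡ 1 + p^(k−1) (mod p^k) and u ≡ 1 (mod n/p^k). Then u has multiplicative order dividing p, and for the action of the cyclic subgroup C = ⟨u⟩ of (ℤ/nℤ)ˣ on the additive group ℤ/nℤ by multiplication, the second group cohomology H²(C, ℤ/nℤ) is trivial if p is odd or (p = 2 and k > 2), and has exactly 2 elements if p = 2 and k = 2. -/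
open CategoryTheory

theorem pi_surj {G : Type} [CommGroup G] [Fintype G] (A : Rep ℤ G) (g : G)
    (hg : ∀ x, x ∈ Subgroup.zpowers g) :
    Function.Surjective (Rep.FiniteCyclicGroup.groupCohomologyπEven A g hg 2 even_two) := by
  rw [← ModuleCat.epi_iff_surjective]
  have h1 : Epi (Rep.FiniteCyclicGroup.normHomCompSub A g).moduleCatCyclesIso.inv :=
    @IsIso.epi_of_iso _ _ _ _ _ (Iso.isIso_inv _)
  have h3 : Epi (Rep.FiniteCyclicGroup.groupCohomologyIsoEven A g hg 2 even_two).inv :=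
    @IsIso.epi_of_iso _ _ _ _ _ (Iso.isIso_inv _)
  exact epi_comp' h1 (epi_comp' inferInstance h3)

theorem arith_aux (n : ℕ) (p k : ℕ) (hp : p.Prime) (hk : 2 ≤ k)
    (hdvd : p ^ k ∣ n) (hndvd : ¬ p ^ (k + 1) ∣ n)
    (u : (ZMod n)ˣ)
    (hu₁ : (ZMod.castHom hdvd (ZMod (p ^ k))) (u : ZMod n) =
      1 + (p : ZMod (p ^ k)) ^ (k - 1))
    (hu₂ : (ZMod.castHom (Nat.div_dvd_of_dvd hdvd) (ZMod (n / p ^ k))) (u : ZMod n) = 1) :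
    ∃ (m : ℕ) (c t : ℤ), n = p ^ k * m ∧ (m : ℤ) * c = 1 + p * t ∧
      (u : ZMod n) = ((1 + p ^ (k - 1) * (m * c) : ℤ) : ZMod n) := by
  obtain ⟨m, hm⟩ := hdvd
  obtain ⟨z, hz⟩ := ZMod.intCast_surjective (u : ZMod n)
  have hpk : 0 < p ^ k := pow_pos hp.pos k
  have hdiv : n / p ^ k = m := by rw [hm]; exact Nat.mul_div_cancel_left m hpk
  have h1 : ((p ^ k : ℕ) : ℤ) ∣ z - (1 + p ^ (k - 1)) := by
    rw [← hz, map_intCast] at hu₁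
    rw [← ZMod.intCast_zmod_eq_zero_iff_dvd, Int.cast_sub, hu₁]; simp
  have h2 : (m : ℤ) ∣ z - 1 := by
    rw [← hdiv]
    rw [← hz, map_intCast] at hu₂
    rw [← ZMod.intCast_zmod_eq_zero_iff_dvd, Int.cast_sub, hu₂]; simp
  have hpm : ¬ p ∣ m := by
    rintro ⟨s, rfl⟩
    exact hndvd ⟨s, by rw [hm, pow_succ]; ring⟩
  obtain ⟨t, ht⟩ := h1
  have hkk : p ^ k = p ^ (k - 1) * p := by rw [← pow_succ]; congr 1; omega
  have hz1 : z - 1 = (p:ℤ) ^ (k - 1) * (1 + p * t) := by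
    rw [hkk] at ht; push_cast at ht; linear_combination ht
  have hcop : IsCoprime (m : ℤ) ((p : ℤ) ^ (k - 1)) := by
    apply IsCoprime.pow_right
    rw [Nat.isCoprime_iff_coprime]
    exact ((Nat.Prime.coprime_iff_not_dvd hp).2 hpm).symm
  rw [hz1] at h2
  obtain ⟨c, hc⟩ := hcop.dvd_of_dvd_mul_left h2
  refine ⟨m, c, t, hm, hc.symm, ?_⟩
  rw [← hz, ← hc, ← hz1]; congr 1; ring

theorem norm_aux (n : ℕ) [NeZero n] (u : (ZMod n)ˣ) [Fintype (Subgroup.zpowers u)] (p : ℕ)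
    (ho : orderOf u = p) (x : ZMod n) :
    (Rep.of (Representation.ofDistribMulAction ℤ (Subgroup.zpowers u) (ZMod n))).norm.hom.toLinearMap x
      = (∑ i ∈ Finset.range p, (u : ZMod n) ^ i) * x := by
  have : (Rep.of (Representation.ofDistribMulAction ℤ (Subgroup.zpowers u) (ZMod n))).norm.hom.toLinearMap x
     = ∑ g : Subgroup.zpowers u, ((g : (ZMod n)ˣ) : ZMod n) * x := by
    simp [Rep.norm, Representation.norm, Representation.ofDistribMulAction]
    rfl
  rw [this, ← Finset.sum_mul]
  congr 1
  have hfin : IsOfFinOrder u := isOfFinOrder_of_finite u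
  rw [← (finEquivZPowers hfin).sum_comp, ← ho, ← Fin.sum_univ_eq_sum_range]
  simp [finEquivZPowers_apply]

theorem h2_cyclic_alpha_p
    (n : ℕ) (hn : 1 ≤ n) (p k : ℕ) (hp : p.Prime) (hk : 2 ≤ k)
    (hdvd : p ^ k ∣ n) (hndvd : ¬ p ^ (k + 1) ∣ n)
    (u : (ZMod n)ˣ)
    (hu₁ : (ZMod.castHom hdvd (ZMod (p ^ k))) (u : ZMod n) =
      1 + (p : ZMod (p ^ k)) ^ (k - 1))
    (hu₂ : (ZMod.castHom (Nat.div_dvd_of_dvd hdvd) (ZMod (n / p ^ k))) (u : ZMod n) = 1) :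
    orderOf u ∣ p ∧
      ((Odd p ∨ (p = 2 ∧ 2 < k)) →
        Subsingleton (groupCohomology.H2 (Rep.of
          (Representation.ofDistribMulAction ℤ (Subgroup.zpowers u) (ZMod n))))) ∧
      ((p = 2 ∧ k = 2) →
        Nat.card (groupCohomology.H2 (Rep.of
          (Representation.ofDistribMulAction ℤ (Subgroup.zpowers u) (ZMod n)))) = 2) := by
  obtain ⟨m, c, t, hm, hc, hu⟩ := arith_aux n p k hp hk hdvd hndvd u hu₁ hu₂
  clear hu₁ hu₂
  haveI : NeZero n := ⟨by omega⟩
  obtain ⟨j, rfl⟩ : ∃ j, k = j + 2 := ⟨k - 2, by omega⟩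
  have hn0 : (p : ZMod n) ^ (j + 2) * m = 0 := by
    have := ZMod.natCast_self n
    rw [hm] at this ⊢
    push_cast at this; exact this
  simp only [show j + 2 - 1 = j + 1 from rfl] at hu
  obtain ⟨e, he⟩ : ∃ e : ZMod n, e = p ^ (j + 1) * (m * c) := ⟨_, rfl⟩
  have hue : (u : ZMod n) = 1 + e := by rw [hu, he]; push_cast; rfl
  have hpe : (p : ZMod n) * e = 0 := by rw [he]; linear_combination (c : ZMod n) * hn0
  have hee : e * e = 0 := by
    nth_rewrite 1 [he]
    linear_combination ((p : ZMod n) ^ j * m * c) * hpe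
  have hpow : ∀ i : ℕ, (u : ZMod n) ^ i = 1 + i * e := by
    intro i
    induction i with
    | zero => simp
    | succ i ih => rw [pow_succ, ih, hue]; push_cast; linear_combination (i : ZMod n) * hee
  have hpdvd : ∀ X : ℤ, (p ^ (j + 1) * (m * c) * X : ZMod n) = 0 → (p : ℤ) ∣ X := by
    intro X hX
    have h1 : (n : ℤ) ∣ p ^ (j + 1) * (m * c) * X := by
      rw [← ZMod.intCast_zmod_eq_zero_iff_dvd]; push_cast; exact hX
    have h2 : (p : ℤ) ^ (j + 1) * p ∣ p ^ (j + 1) * (m * c * X) := by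
      refine dvd_trans ⟨m, ?_⟩ (h1.trans ⟨1, by ring⟩)
      rw [hm]; push_cast; ring
    have h3 := (mul_dvd_mul_iff_left (pow_ne_zero (j+1) (by exact_mod_cast hp.ne_zero))).1 h2
    obtain ⟨s, hs⟩ := h3
    rw [hc] at hs
    exact ⟨s - t * X, by linear_combination hs⟩
  have hker : ∀ x : ZMod n, e * x = 0 → ∃ y, x = p * y := by
    intro x hx
    obtain ⟨X, rfl⟩ := ZMod.intCast_surjective x
    obtain ⟨Y, rfl⟩ := hpdvd X (by rw [← he]; exact hx)
    exact ⟨Y, by push_cast; rfl⟩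
  have hne : e ≠ 0 := by
    intro h0
    have := hpdvd 1 (by rw [← he, h0]; simp)
    have h2 : (p : ℤ) ∣ ((1 : ℕ) : ℤ) := by exact_mod_cast this
    exact hp.one_lt.ne' (Nat.dvd_one.1 (Int.natCast_dvd_natCast.1 h2))
  have ho : orderOf u = p := by
    haveI := Fact.mk hp
    apply orderOf_eq_prime
    · ext; push_cast; rw [hpow, hpe]; simp
    · rintro rfl
      apply hne; simpa using hue.symm
  refine ⟨ho.dvd, ?_⟩
  letI : Fintype (Subgroup.zpowers u) := Fintype.ofFinite _
  have hg : ∀ x, x ∈ Subgroup.zpowers (⟨u, Subgroup.mem_zpowers u⟩ : Subgroup.zpowers u) := by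
    rintro ⟨x, i, rfl⟩
    exact ⟨i, by ext; simp⟩
  have hsurj := pi_surj (Rep.of (Representation.ofDistribMulAction ℤ (Subgroup.zpowers u) (ZMod n))) _ hg
  have hiff := Rep.FiniteCyclicGroup.groupCohomologyπEven_eq_iff (Rep.of (Representation.ofDistribMulAction ℤ (Subgroup.zpowers u) (ZMod n))) _ hg 2 even_two
  have hmem : ∀ x : ZMod n, x ∈ LinearMap.ker (Rep.applyAsHom (Rep.of (Representation.ofDistribMulAction ℤ (Subgroup.zpowers u) (ZMod n))) (⟨u, Subgroup.mem_zpowers u⟩ : Subgroup.zpowers u) - 𝟙 _).hom.toLinearMap ↔ e * x = 0 := by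
    intro x
    rw [LinearMap.mem_ker]
    have : (Rep.applyAsHom (Rep.of (Representation.ofDistribMulAction ℤ (Subgroup.zpowers u) (ZMod n))) (⟨u, Subgroup.mem_zpowers u⟩ : Subgroup.zpowers u) - 𝟙 _).hom.toLinearMap x = (u : ZMod n) * x - x := by
      simp [Rep.sub_hom, Rep.applyAsHom]
      rfl
    rw [this, hue]
    constructor <;> intro h <;> linear_combination h
  have hnorm := norm_aux n u p ho
  have hsum : ∑ i ∈ Finset.range p, (u : ZMod n) ^ i = p + ((∑ i ∈ Finset.range p, i : ℕ) : ZMod n) * e := by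
    simp only [hpow, Finset.sum_add_distrib, ← Finset.sum_mul]
    simp
  rw [hsum] at hnorm
  constructor
  · intro hcase
    have key : ∃ w : ZMod n, (p + ((∑ i ∈ Finset.range p, i : ℕ) : ZMod n) * e) * w = p := by
      rcases hcase with ⟨q, hq⟩ | ⟨rfl, hj⟩
      · refine ⟨1, ?_⟩
        have : ∑ i ∈ Finset.range p, i = p * q := by
          rw [Finset.sum_range_id, hq, Nat.add_sub_cancel, mul_left_comm]
          exact Nat.mul_div_cancel_left _ two_pos
        rw [this]; push_cast; linear_combination (q : ZMod n) * hpe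
      · obtain ⟨i, rfl⟩ : ∃ i, j = i + 1 := ⟨j - 1, by omega⟩
        refine ⟨1 - 2 ^ (i + 1) * (m * c), ?_⟩
        simp only [Finset.sum_range_succ, Finset.sum_range_zero]
        push_cast at hpe he ⊢
        have h3 : e * (2 ^ (i + 1) * (m * c)) = 0 := by
          linear_combination (2 ^ i * (m * c) : ZMod n) * hpe
        linear_combination he - h3
    obtain ⟨w, hw⟩ := key
    refine ⟨fun a b => ?_⟩
    obtain ⟨x, rfl⟩ := hsurj a
    obtain ⟨y, rfl⟩ := hsurj b
    refine (hiff x y).2 ?_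
    obtain ⟨r, hr⟩ := hker _ ((hmem _).1 (x - y).2)
    refine ⟨w * r, ?_⟩
    refine (hnorm _).trans ?_
    rw [← mul_assoc, hw, ← hr]; rfl
  · rintro ⟨rfl, hj⟩
    obtain rfl : j = 0 := by omega
    simp only [Finset.sum_range_succ, Finset.sum_range_zero] at hnorm
    push_cast at hpe he hnorm hker
    have hN : (2 + 1 * e : ZMod n) = 4 * (1 + t) := by
      have hc' : ((m : ZMod n)) * c = 1 + 2 * t := by exact_mod_cast congrArg (Int.cast : ℤ → ZMod n) hc
      rw [he, hc']; ring
    rw [Nat.card_eq_two_iff]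
    have hm2 : e * 2 = 0 := by rw [mul_comm]; exact hpe
    refine ⟨Rep.FiniteCyclicGroup.groupCohomologyπEven (Rep.of (Representation.ofDistribMulAction ℤ (Subgroup.zpowers u) (ZMod n))) _ hg 2 even_two ⟨(2 : ZMod n), (hmem _).2 hm2⟩,
      Rep.FiniteCyclicGroup.groupCohomologyπEven (Rep.of (Representation.ofDistribMulAction ℤ (Subgroup.zpowers u) (ZMod n))) _ hg 2 even_two ⟨(0 : ZMod n), (hmem _).2 (mul_zero e)⟩, fun h => ?_, ?_⟩
    · obtain ⟨y, hy⟩ := (hiff _ _).1 h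
      replace hy := (hnorm y).symm.trans hy
      replace hy : (2 + 1 * e : ZMod n) * y = 2 - 0 := hy
      rw [hN] at hy
      obtain ⟨Y, rfl⟩ := ZMod.intCast_surjective y
      have h4 : (n : ℤ) ∣ 4 * (1 + t) * Y - 2 := by
        rw [← ZMod.intCast_zmod_eq_zero_iff_dvd]; push_cast; rw [hy]; ring
      rw [hm] at h4
      obtain ⟨s, hs⟩ := h4
      push_cast at hs
      have : (4 : ℤ) ∣ 2 := ⟨(1 + t) * Y - m * s, by linear_combination -hs⟩
      norm_num at this
    · refine Set.eq_univ_of_forall fun a => ?_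
      obtain ⟨⟨x, hx⟩, rfl⟩ := hsurj a
      obtain ⟨r, hr⟩ := hker _ ((hmem _).1 hx)
      obtain ⟨R, rfl⟩ := ZMod.intCast_surjective r
      obtain ⟨R', hR | hR⟩ := Int.even_or_odd' R
      · right
        refine (hiff _ _).2 ⟨((2 * R' : ℤ) : ZMod n), (hnorm _).trans ?_⟩
        change _ = x - 0
        rw [hr, hR]; push_cast; linear_combination (R' : ZMod n) * hpe
      · left
        refine (hiff _ _).2 ⟨((2 * R' : ℤ) : ZMod n), (hnorm _).trans ?_⟩
        change _ = x - 2
        rw [hr, hR]; push_cast; linear_combination (R' : ZMod n) * hpe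
end

section
/- Let G be a finite group with a cyclic normal subgroup N of order n such that the centralizer of N in G equals N. Let p be a prime and k ≥ 2 an integer with p^k ∣ n and p^(k+1) ∤ n, and assume that p is odd, or that p = 2 and k > 2. Let e be an integer with e ≡ 1 + p^(k−1) (mod p^k) and e ≡ 1 (mod n/p^k). If there exists x ∈ G such that x a x⁻¹ = a^e for all a ∈ N, then there exists d ∈ G of order p such that d a d⁻¹ = a^e for all a ∈ N and ⟨d⟩ ∩ N = 1. -/
theorem aux_pow_mod (f : ℤ) (i : ℕ) : ∃ w : ℤ, (1 + f) ^ i = 1 + i * f + f ^ 2 * w := by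
  induction i with
  | zero => exact ⟨0, by simp⟩
  | succ i ih =>
    obtain ⟨w, hw⟩ := ih
    refine ⟨w + i + f * w, ?_⟩
    rw [pow_succ, hw]; push_cast; ring

theorem aux_sum_mod (f : ℤ) (m : ℕ) :
    ∃ w : ℤ, 2 * ∑ i ∈ Finset.range m, (1 + f) ^ i = 2 * m + m * (m - 1) * f + 2 * f ^ 2 * w := by
  induction m with
  | zero => exact ⟨0, by simp⟩
  | succ m ih =>
    obtain ⟨w, hw⟩ := ih
    obtain ⟨v, hv⟩ := aux_pow_mod f m
    refine ⟨w + v, ?_⟩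
    rw [Finset.sum_range_succ, mul_add, hw, hv]; push_cast; ring

theorem aux_mul_pow {G : Type*} [Group G] (N : Subgroup G) (e : ℤ) (x a : G) (ha : a ∈ N)
    (hx : ∀ a ∈ N, x * a * x⁻¹ = a ^ e) (m : ℕ) :
    (a * x) ^ m = a ^ (∑ i ∈ Finset.range m, e ^ i) * x ^ m := by
  induction m with
  | zero => simp
  | succ m ih =>
    have h := hx _ (N.zpow_mem ha (∑ i ∈ Finset.range m, e ^ i))
    have h' : x * a ^ (∑ i ∈ Finset.range m, e ^ i)
        = (a ^ (∑ i ∈ Finset.range m, e ^ i)) ^ e * x := by rw [← h]; group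
    rw [pow_succ', ih, geom_sum_succ, pow_succ', zpow_add_one, mul_comm e, zpow_mul]
    rw [mul_assoc a x, ← mul_assoc x, h', ← mul_assoc, ← mul_assoc, ← mul_assoc]
    congr 2
    rw [← zpow_mul, ← zpow_one_add, ← zpow_add_one, add_comm]

theorem aux_pow_act {G : Type*} [Group G] (N : Subgroup G) (e : ℤ) (x : G)
    (hx : ∀ a ∈ N, x * a * x⁻¹ = a ^ e) (m : ℕ) (a : G) (ha : a ∈ N) :
    x ^ m * a * (x ^ m)⁻¹ = a ^ (e ^ m) := by
  induction m with
  | zero => simp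
  | succ m ih =>
    rw [pow_succ', pow_succ, zpow_mul, ← hx _ (N.zpow_mem ha _), ← ih]; group

theorem aux_arith (n p k : ℕ) (hp : p.Prime) (hk : 2 ≤ k)
    (hdvd : p ^ k ∣ n) (hndvd : ¬ p ^ (k + 1) ∣ n) (hcase : Odd p ∨ (p = 2 ∧ 2 < k))
    (e : ℤ) (he₁ : e ≡ 1 + (p : ℤ) ^ (k - 1) [ZMOD (p : ℤ) ^ k])
    (he₂ : e ≡ 1 [ZMOD ((n / p ^ k : ℕ) : ℤ)]) :
    ¬ (n : ℤ) ∣ e - 1 ∧ (∀ j : ℤ, (n : ℤ) ∣ j * (e - 1) → (p : ℤ) ∣ j) ∧ (n : ℤ) ∣ e ^ p - 1 ∧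
    ∃ u : ℤ, (n : ℤ) ∣ p - u * ∑ i ∈ Finset.range p, e ^ i := by
  obtain ⟨m, rfl⟩ := hdvd
  have hp0 : 0 < p := hp.pos
  rw [Nat.mul_div_cancel_left _ (pow_pos hp0 k)] at he₂
  have hpm : ¬ p ∣ m := fun h => hndvd (by rw [pow_succ]; exact Nat.mul_dvd_mul_left _ h)
  obtain ⟨l, rfl⟩ : ∃ l, k = l + 2 := ⟨k - 2, by omega⟩
  have hl : l + 2 - 1 = l + 1 := rfl
  rw [hl] at he₁
  have hpz : (p : ℤ) ≠ 0 := by exact_mod_cast hp0.ne'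
  have hpp : Prime (p : ℤ) := Nat.prime_iff_prime_int.mp hp
  have hm0 : (m : ℤ) ≠ 0 := by rintro h; exact hpm (by simp [Int.natCast_eq_zero.mp h])
  have h1 : (m : ℤ) ∣ e - 1 := he₂.symm.dvd
  obtain ⟨t, ht⟩ := he₁.symm.dvd
  have h2 : (p : ℤ) ^ (l + 1) ∣ e - 1 := ⟨1 + p * t, by linear_combination ht⟩
  have hco : IsCoprime ((p : ℤ) ^ (l + 1)) (m : ℤ) := by
    apply IsCoprime.pow_left
    exact Nat.isCoprime_iff_coprime.mpr ((Nat.Prime.coprime_iff_not_dvd hp).mpr hpm)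
  obtain ⟨g, hg⟩ := hco.mul_dvd h2 h1
  have hndf : ¬ ((p ^ (l + 2) * m : ℕ) : ℤ) ∣ e - 1 := by
    rintro ⟨c, hc⟩
    push_cast at hc
    have : (p : ℤ) ^ (l + 1) * 1 = (p : ℤ) ^ (l + 1) * (p * (m * c - t)) := by
      linear_combination hc - ht
    have := mul_left_cancel₀ (pow_ne_zero _ hpz) this
    exact hpp.not_dvd_one ⟨_, this⟩
  have hpg : ¬ (p : ℤ) ∣ g := by
    rintro ⟨c, rfl⟩
    exact hndf ⟨c, by push_cast; linear_combination hg⟩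
  have hS : ∃ w : ℤ, 2 * ∑ i ∈ Finset.range p, e ^ i
      = 2 * p + p * (p - 1) * (e - 1) + 2 * (e - 1) ^ 2 * w := by
    simpa using aux_sum_mod (e - 1) p
  obtain ⟨w, hw⟩ := hS
  have hgeom := geom_sum_mul e p
  have main : (p : ℤ) ∣ ∑ i ∈ Finset.range p, e ^ i ∧
      ∃ u : ℤ, ((p ^ (l + 2) * m : ℕ) : ℤ) ∣ p - u * ∑ i ∈ Finset.range p, e ^ i := by
    rcases hcase with ⟨j, hj⟩ | ⟨h2, hl2⟩
    · have hs : ∑ i ∈ Finset.range p, e ^ i = p + p * j * (e - 1) + (e - 1) ^ 2 * w := by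
        have : (p : ℤ) = 2 * j + 1 := by exact_mod_cast hj
        have h' : (p : ℤ) - 1 = 2 * j := by linarith
        rw [h'] at hw
        linarith
      rw [hs, hg]
      refine ⟨⟨1 + j * (p ^ (l + 1) * m * g) + p ^ (2 * l + 1) * (m * g) ^ 2 * w, by ring⟩, 1,
        ⟨- j * g - p ^ l * m * g ^ 2 * w, ?_⟩⟩
      push_cast; ring
    · subst h2
      obtain ⟨r, rfl⟩ : ∃ r, l = r + 1 := ⟨l - 1, by omega⟩
      have hs : ∑ i ∈ Finset.range 2, e ^ i = 2 + (e - 1) := by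
        simp [Finset.sum_range_succ]; ring
      rw [hs, hg]
      refine ⟨⟨1 + 2 ^ (r + 1) * m * g, by push_cast; ring⟩, 1 - 2 ^ (r + 1) * m * g,
        ⟨2 ^ r * m * g ^ 2, ?_⟩⟩
      push_cast; ring
  refine ⟨hndf, ?_, ?_, main.2⟩
  · rintro j ⟨c, hc⟩
    rw [hg] at hc
    push_cast at hc
    have : ((p : ℤ) ^ (l + 1) * m) * (j * g) = ((p : ℤ) ^ (l + 1) * m) * (p * c) := by
      linear_combination hc
    have := mul_left_cancel₀ (mul_ne_zero (pow_ne_zero _ hpz) hm0) this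
    exact (hpp.dvd_or_dvd ⟨_, this⟩).resolve_right hpg
  · obtain ⟨c, hc⟩ := main.1
    rw [← hgeom, hc, hg]
    exact ⟨c * g, by push_cast; ring⟩

theorem exists_complement_generating_alpha_p
    (G : Type*) [Group G] [Finite G] (N : Subgroup G) [N.Normal]
    (hNcyc : IsCyclic N) (n : ℕ) (hn : Nat.card N = n)
    (hcent : Subgroup.centralizer (N : Set G) = N)
    (p k : ℕ) (hp : p.Prime) (hk : 2 ≤ k)
    (hdvd : p ^ k ∣ n) (hndvd : ¬ p ^ (k + 1) ∣ n)
    (hcase : Odd p ∨ (p = 2 ∧ 2 < k))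
    (e : ℤ) (he₁ : e ≡ 1 + (p : ℤ) ^ (k - 1) [ZMOD (p : ℤ) ^ k])
    (he₂ : e ≡ 1 [ZMOD ((n / p ^ k : ℕ) : ℤ)])
    (x : G) (hx : ∀ a ∈ N, x * a * x⁻¹ = a ^ e) :
    ∃ d : G, orderOf d = p ∧ (∀ a ∈ N, d * a * d⁻¹ = a ^ e) ∧
      Subgroup.zpowers d ⊓ N = ⊥ := by
  obtain ⟨hA, hB, hC, u, hD⟩ := aux_arith n p k hp hk hdvd hndvd hcase e he₁ he₂
  haveI : Fact p.Prime := ⟨hp⟩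
  obtain ⟨⟨g, hgN⟩, hg⟩ := hNcyc.exists_generator
  have hgen : ∀ a ∈ N, ∃ j : ℤ, g ^ j = a := by
    intro a ha
    obtain ⟨j, hj⟩ := Subgroup.mem_zpowers_iff.mp (hg ⟨a, ha⟩)
    exact ⟨j, by simpa using congrArg Subtype.val hj⟩
  have hord : orderOf g = n := by
    rw [← hn, ← orderOf_eq_card_of_forall_mem_zpowers hg, Subgroup.orderOf_mk]
  have hz : ∀ j : ℤ, g ^ j = 1 ↔ (n : ℤ) ∣ j := by
    intro j; rw [← hord, orderOf_dvd_iff_zpow_eq_one]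
  have hcomm : ∀ a ∈ N, ∀ b ∈ N, a * b = b * a := by
    intro a ha b hb
    obtain ⟨i, rfl⟩ := hgen a ha
    obtain ⟨j, rfl⟩ := hgen b hb
    rw [← zpow_add, ← zpow_add, add_comm]
  have hxpN : x ^ p ∈ N := by
    rw [← hcent, Subgroup.mem_centralizer_iff]
    intro a ha
    have h1 := aux_pow_act N e x hx p a ha
    obtain ⟨i, rfl⟩ := hgen a ha
    have h2 : (g ^ i) ^ (e ^ p) = g ^ i := by
      rw [← mul_inv_eq_one, ← zpow_mul, ← zpow_neg, ← zpow_add, hz]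
      exact (Dvd.dvd.mul_left hC i).trans (dvd_of_eq (by ring))
    rw [h2] at h1
    exact (mul_inv_eq_iff_eq_mul.mp h1).symm
  obtain ⟨j, hj⟩ := hgen _ hxpN
  have hpj : (p : ℤ) ∣ j := by
    apply hB
    rw [← hz, mul_sub, zpow_sub, mul_one, zpow_mul, hj, ← hx _ hxpN]
    group
  obtain ⟨c, rfl⟩ := hpj
  set s := ∑ i ∈ Finset.range p, e ^ i with hs
  have haN : g ^ (-(u * c)) ∈ N := N.zpow_mem hgN _
  have hdp : (g ^ (-(u * c)) * x) ^ p = 1 := by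
    rw [aux_mul_pow N e x _ haN hx, ← hj, ← zpow_mul, ← zpow_add, hz, ← hs]
    exact (Dvd.dvd.mul_left hD c).trans (dvd_of_eq (by ring))
  have hact : ∀ a ∈ N, (g ^ (-(u * c)) * x) * a * (g ^ (-(u * c)) * x)⁻¹ = a ^ e := by
    intro a ha
    have h := hcomm _ haN _ (N.zpow_mem ha e)
    calc _ = g ^ (-(u * c)) * (x * a * x⁻¹) * (g ^ (-(u * c)))⁻¹ := by
            simp only [mul_inv_rev, mul_assoc]
      _ = a ^ e := by rw [hx a ha, h, mul_inv_cancel_right]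
  generalize g ^ (-(u * c)) * x = d at hdp hact
  have hdN : d ∉ N := by
    intro hd
    have h := hact g hgN
    rw [hcomm d hd g hgN, mul_inv_cancel_right] at h
    apply hA
    rw [← hz, zpow_sub, ← h]; simp
  have hod : orderOf d = p := orderOf_eq_prime hdp (fun h => hdN (h ▸ N.one_mem))
  refine ⟨d, hod, hact, ?_⟩
  rw [eq_bot_iff]
  rintro y ⟨hy1, hy2⟩
  obtain ⟨i, rfl⟩ := Subgroup.mem_zpowers_iff.mp hy1
  rw [Subgroup.mem_bot, ← orderOf_dvd_iff_zpow_eq_one, hod]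
  by_contra hi
  obtain ⟨r, t, hrt⟩ := (Nat.prime_iff_prime_int.mp hp).coprime_iff_not_dvd.mpr hi
  apply hdN
  have : d = (d ^ i) ^ t := by
    rw [← zpow_mul]
    conv_lhs => rw [← zpow_one d, ← hrt, zpow_add, mul_comm r, zpow_mul, zpow_natCast, hdp,
      one_zpow, one_mul, mul_comm]
  rw [this]
  exact N.zpow_mem hy2 t
end

section
/- Let p be an odd prime. Then the first group cohomology H¹(SL(2, 𝔽_p), 𝔽_p²) of the special linear group SL(2, ℤ/pℤ) with coefficients in its natural two-dimensional module (Fin 2 → ℤ/pℤ, with the action given by matrix–vector multiplication) is trivial. -/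
/-- The natural two-dimensional representation of `SL(2, ℤ/pℤ)` on `Fin 2 → ℤ/pℤ`,
given by matrix–vector multiplication. -/
def SL2.naturalRep (p : ℕ) :
    Representation (ZMod p) (Matrix.SpecialLinearGroup (Fin 2) (ZMod p)) (Fin 2 → ZMod p) :=
  (LinearEquiv.automorphismGroup.toLinearMapMonoidHom).comp
    Matrix.SpecialLinearGroup.toLin'

theorem h1_SL2_natural_trivial (p : ℕ) [Fact p.Prime] (hp : Odd p) :
    Subsingleton (groupCohomology.H1 (Rep.of (SL2.naturalRep p))) := by
  have h2 : (2 : ZMod p) ≠ 0 := by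
    intro h
    have h' : ((2 : ℕ) : ZMod p) = 0 := by exact_mod_cast h
    rw [ZMod.natCast_eq_zero_iff] at h'
    have := (Nat.prime_dvd_prime_iff_eq Fact.out Nat.prime_two).1 h'
    subst this
    exact absurd hp (by decide)
  refine subsingleton_of_forall_eq 0 fun y => ?_
  induction y using groupCohomology.H1_induction_on with
  | h f =>
  rw [groupCohomology.H1π_eq_zero_iff]
  have hneg : ∀ v : Fin 2 → ZMod p, SL2.naturalRep p (-1) v = -v := by
    intro v
    simp [SL2.naturalRep, Matrix.SpecialLinearGroup.toLin'_apply]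
  have hc := (groupCohomology.mem_cocycles₁_iff f.1).1 f.2
  refine ⟨(-(2 : ZMod p)⁻¹) • (f.1 (-1) : Fin 2 → ZMod p), ?_⟩
  funext g
  have e1 : (f.1 (-1 * g) : Fin 2 → ZMod p) = SL2.naturalRep p (-1) (f.1 g) + f.1 (-1) := hc (-1) g
  have e2 : (f.1 (g * -1) : Fin 2 → ZMod p) = SL2.naturalRep p g (f.1 (-1)) + f.1 g := hc g (-1)
  have e0 : -1 * g = g * -1 := by simp
  rw [e0, e2, hneg] at e1
  change SL2.naturalRep p g ((-(2 : ZMod p)⁻¹) • (f.1 (-1) : Fin 2 → ZMod p))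
    - (-(2 : ZMod p)⁻¹) • (f.1 (-1) : Fin 2 → ZMod p) = (f.1 g : Fin 2 → ZMod p)
  rw [map_smul]
  generalize SL2.naturalRep p g (f.1 (-1)) = a at *
  generalize (f.1 g : Fin 2 → ZMod p) = b at *
  generalize (f.1 (-1) : Fin 2 → ZMod p) = c at *
  funext i
  have := congrFun e1 i
  simp only [Pi.add_apply, Pi.neg_apply, Pi.sub_apply, Pi.smul_apply, smul_eq_mul] at this ⊢
  field_simp
  linear_combination -this
end
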